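/- Let n ≥ 2, let 0 < α ≤ ∞, and let f : [0,α) → ℝ be continuous with f(0) ≤ 0. If f is matrix convex of order n on [0,α), then the function g(t) = f(t)/t is matrix monotone of order n−1 on (0,α). -/

import Mathlib

/-!
The increment `B - A ≥ 0` is a sum of rank-one matrices `v vᴴ`, and all partial sums `A + ∑ v vᴴ`
lie between `A` and `B`, so their spectra stay in `(0, α)`. Hence it suffices to treat
`B = A + v vᴴ`.

In that case put `c = B^(-1/2) A^(1/2)` and `d = B^(-1/2) v`. Then `c cᴴ + d dᴴ = 1` and
`cᴴ B c = A`: the contraction `c` has a defect of rank one, so a single extra dimension suffices to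
dilate it. The rows `R = (c, d)` and `R' = (c, -d)` satisfy `R Rᴴ = R' R'ᴴ = 1`, and the average of
the `n × n` matrices `Rᴴ B R` and `R'ᴴ B R'` is block diagonal with upper-left corner `A`. Since
`f 0 ≤ 0` gives `f(Rᴴ B R) ≤ Rᴴ f(B) R`, convexity of order `n` yields `f(A) ≤ cᴴ f(B) c`
(`rankOne_jensen`). Conjugating by `A^(-1/2)` turns this into `f(A) A⁻¹ ≤ f(B) B⁻¹`
(`rankOne_monotone`).
-/

open Matrix Set MeasureTheory
open scoped ComplexOrder

/-- `f` is matrix monotone of order `n` on the set `I ⊆ ℝ`: for all `n × n` Hermitian complex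
matrices `A, B` with spectra contained in `I`, `A ≤ B` in the Loewner order (i.e. `B - A` is
positive semidefinite) implies `f(A) ≤ f(B)`, where `f(A)` is given by the continuous functional
calculus (applying `f` to the eigenvalues in a spectral decomposition). -/
def MatrixMonotoneOn (n : ℕ) (f : ℝ → ℝ) (I : Set ℝ) : Prop :=
  ∀ A B : Matrix (Fin n) (Fin n) ℂ, A.IsHermitian → B.IsHermitian →
    spectrum ℝ A ⊆ I → spectrum ℝ B ⊆ I → (B - A).PosSemidef →
    (cfc f B - cfc f A).PosSemidef

/-- `f` is matrix convex of order `n` on the set `I ⊆ ℝ`: for all `n × n` Hermitian complex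
matrices `A, B` with spectra contained in `I` and all `l ∈ [0,1]`,
`f(l•A + (1-l)•B) ≤ l•f(A) + (1-l)•f(B)` in the Loewner order. -/
def MatrixConvexOn (n : ℕ) (f : ℝ → ℝ) (I : Set ℝ) : Prop :=
  ∀ A B : Matrix (Fin n) (Fin n) ℂ, A.IsHermitian → B.IsHermitian →
    spectrum ℝ A ⊆ I → spectrum ℝ B ⊆ I → ∀ l : ℝ, 0 ≤ l → l ≤ 1 →
    (l • cfc f A + (1 - l) • cfc f B - cfc f (l • A + (1 - l) • B)).PosSemidef

open scoped MatrixOrder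

section Calculus

variable {ι κ : Type*} [Fintype ι] [DecidableEq ι] [Fintype κ] [DecidableEq κ]

lemma continuousOn_matrixSpectrum (f : ℝ → ℝ) (X : Matrix ι ι ℂ) :
    ContinuousOn f (spectrum ℝ X) :=
  (Matrix.finite_real_spectrum (A := X)).continuousOn f

/-- The functional calculus respects intertwiners: on the finite set of all eigenvalues involved,
`f` agrees with a polynomial. -/
lemma cfc_intertwine (f : ℝ → ℝ) {X : Matrix ι ι ℂ} {Y : Matrix κ κ ℂ} (hX : X.IsHermitian)
    (hY : Y.IsHermitian) (T : Matrix ι κ ℂ) (h : X * T = T * Y) :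
    cfc f X * T = T * cfc f Y := by
  have hfin : (spectrum ℝ X ∪ spectrum ℝ Y).Finite :=
    (Matrix.finite_real_spectrum (A := X)).union (Matrix.finite_real_spectrum (A := Y))
  set p : Polynomial ℝ := Lagrange.interpolate hfin.toFinset id f with hp
  have hev : ∀ x ∈ spectrum ℝ X ∪ spectrum ℝ Y, f x = p.eval x := by
    intro x hx
    exact (Lagrange.eval_interpolate_at_node (v := id) f (Function.injective_id.injOn)
      (hfin.mem_toFinset.2 hx)).symm
  have hXp : cfc f X = Polynomial.aeval X p := by
    rw [← cfc_polynomial p X hX.isSelfAdjoint]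
    exact cfc_congr fun x hx => hev x (Or.inl hx)
  have hYp : cfc f Y = Polynomial.aeval Y p := by
    rw [← cfc_polynomial p Y hY.isSelfAdjoint]
    exact cfc_congr fun x hx => hev x (Or.inr hx)
  rw [hXp, hYp]
  clear_value p
  clear hp hXp hYp hev
  induction p using Polynomial.induction_on' with
  | add p q hp hq => rw [map_add, map_add, Matrix.add_mul, Matrix.mul_add, hp, hq]
  | monomial k a =>
    have hk : X ^ k * T = T * Y ^ k := by
      induction k with
      | zero => simp
      | succ k ih => rw [pow_succ, pow_succ', Matrix.mul_assoc, h, ← Matrix.mul_assoc, ih,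
          Matrix.mul_assoc, ← pow_succ, ← pow_succ']
    rw [Polynomial.aeval_monomial, Polynomial.aeval_monomial, ← Algebra.smul_def,
      ← Algebra.smul_def, Matrix.smul_mul, Matrix.mul_smul, hk]

/-- If `R Rᴴ = 1`, then `Rᴴ B R` is `B` on the range of `Rᴴ` and `0` on its complement, where
`f 0 ≤ 0` is used. -/
lemma cfc_coisometry_le (f : ℝ → ℝ) (hf0 : f 0 ≤ 0) {B : Matrix κ κ ℂ} (hB : B.IsHermitian)
    (R : Matrix κ ι ℂ) (hR : R * Rᴴ = 1) :
    cfc f (Rᴴ * B * R) ≤ Rᴴ * cfc f B * R := by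
  set X := Rᴴ * B * R with hXdef
  have hX : X.IsHermitian := Matrix.isHermitian_conjTranspose_mul_mul R hB
  have h1 : cfc f X * Rᴴ = Rᴴ * cfc f B := by
    apply cfc_intertwine f hX hB
    rw [hXdef, Matrix.mul_assoc _ R, hR, Matrix.mul_one]
  have h2 : cfc f X * (1 - Rᴴ * R) = (f 0) • (1 - Rᴴ * R) := by
    have := cfc_intertwine f hX (Matrix.isHermitian_zero (n := ι)) (1 - Rᴴ * R) (by
      rw [hXdef, Matrix.mul_sub, Matrix.mul_one, Matrix.mul_zero, Matrix.mul_assoc _ R,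
        ← Matrix.mul_assoc R, hR, Matrix.one_mul, sub_self])
    rw [this, cfc_apply_zero, Algebra.algebraMap_eq_smul_one, Matrix.mul_smul, Matrix.mul_one]
  have h3 : cfc f X = Rᴴ * cfc f B * R + (f 0) • (1 - Rᴴ * R) := by
    rw [← h2, ← h1, Matrix.mul_sub, Matrix.mul_one, Matrix.mul_assoc]
    abel
  -- `1 - Rᴴ R` is a projection, hence positive semidefinite
  have h4 : (1 - Rᴴ * R).PosSemidef := by
    have h5 : (1 - Rᴴ * R) = (1 - Rᴴ * R)ᴴ * (1 - Rᴴ * R) := by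
      have : Rᴴ * R * (Rᴴ * R) = Rᴴ * R := by
        rw [Matrix.mul_assoc, ← Matrix.mul_assoc R, hR, Matrix.one_mul]
      simp [Matrix.sub_mul, Matrix.mul_sub, this]
    rw [h5]
    exact Matrix.posSemidef_conjTranspose_mul_self _
  rw [Matrix.le_iff, h3]
  have h6 := h4.smul (neg_nonneg.2 hf0)
  have h7 : Rᴴ * cfc f B * R - (Rᴴ * cfc f B * R + f 0 • (1 - Rᴴ * R)) =
      -f 0 • (1 - Rᴴ * R) := by
    rw [neg_smul]
    abel
  rw [h7]
  exact h6

end Calculus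

lemma spectrum_subset_Icc {ι : Type*} [Fintype ι] [DecidableEq ι] {X : Matrix ι ι ℂ}
    (hX : X.IsHermitian) {a b : ℝ} (ha : algebraMap ℝ _ a ≤ X) (hb : X ≤ algebraMap ℝ _ b) :
    spectrum ℝ X ⊆ Icc a b := fun x hx =>
  ⟨(algebraMap_le_iff_le_spectrum (ha := hX.isSelfAdjoint)).1 ha x hx,
    (le_algebraMap_iff_spectrum_le (ha := hX.isSelfAdjoint)).1 hb x hx⟩

lemma spectrum_coisometry_subset {ι κ : Type*} [Fintype ι] [DecidableEq ι] [Fintype κ]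
    [DecidableEq κ] {B : Matrix κ κ ℂ} (hB : B.IsHermitian) {b : ℝ} (hb0 : 0 ≤ b)
    (hsB : spectrum ℝ B ⊆ Icc 0 b) (R : Matrix κ ι ℂ) (hR : R * Rᴴ = 1) :
    spectrum ℝ (Rᴴ * B * R) ⊆ Icc 0 b := by
  have hX : (Rᴴ * B * R).IsHermitian := Matrix.isHermitian_conjTranspose_mul_mul R hB
  have hBle : B ≤ algebraMap ℝ _ b := le_algebraMap_of_spectrum_le fun x hx => (hsB hx).2
  have hB0 : B.PosSemidef := by
    rw [← Matrix.nonneg_iff_posSemidef, ← map_zero (algebraMap ℝ (Matrix κ κ ℂ))]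
    exact algebraMap_le_of_le_spectrum fun x hx => (hsB hx).1
  apply spectrum_subset_Icc hX
  · rw [map_zero, Matrix.nonneg_iff_posSemidef]
    exact hB0.conjTranspose_mul_mul_same R
  · -- `b - Rᴴ B R = Rᴴ (b - B) R + b (1 - Rᴴ R)`, the second term from `t ↦ -b`
    have h1 := (Matrix.le_iff.1 hBle).conjTranspose_mul_mul_same R
    have h2 := cfc_coisometry_le (fun _ => -b) (by simpa using hb0) hB R hR
    rw [cfc_const _ _ hX.isSelfAdjoint, cfc_const _ _ hB.isSelfAdjoint, Matrix.le_iff] at h2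
    rw [Matrix.le_iff]
    convert h1.add h2 using 1
    simp only [map_neg, Matrix.mul_sub, Matrix.sub_mul, Matrix.mul_neg, Matrix.neg_mul]
    abel

/-- Jensen's inequality `f(cᴴ B c) ≤ cᴴ f(B) c` for a contraction `c` with `1 - c cᴴ = d dᴴ` of
rank one, at the cost of one dimension. -/
lemma rankOne_jensen {m : ℕ} {f : ℝ → ℝ} {I : Set ℝ} (hf0 : f 0 ≤ 0)
    (hconv : MatrixConvexOn (m + 1) f I) {b : ℝ} (hb0 : 0 ≤ b) (hI : Icc 0 b ⊆ I)
    {B : Matrix (Fin m) (Fin m) ℂ} (hB : B.IsHermitian) (hsB : spectrum ℝ B ⊆ Icc 0 b)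
    (c : Matrix (Fin m) (Fin m) ℂ) (d : Matrix (Fin m) Unit ℂ) (hcd : c * cᴴ + d * dᴴ = 1) :
    cfc f (cᴴ * B * c) ≤ cᴴ * cfc f B * c := by
  -- `J` and `k` are the inclusions of the first `m` coordinates and of the last one
  let J : Matrix (Fin (m + 1)) (Fin m) ℂ :=
    (1 : Matrix (Fin (m + 1)) (Fin (m + 1)) ℂ).submatrix id Fin.castSucc
  let k : Matrix (Fin (m + 1)) Unit ℂ :=
    (1 : Matrix (Fin (m + 1)) (Fin (m + 1)) ℂ).submatrix id (fun _ => Fin.last m)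
  have hJJ : Jᴴ * J = 1 := by
    ext i j
    simp [J, Matrix.mul_apply, Matrix.one_apply, eq_comm]
  have hkk : kᴴ * k = 1 := by
    ext i j
    simp [k, Matrix.mul_apply, Matrix.one_apply]
  have hJk : Jᴴ * k = 0 := by
    ext i j
    simp [J, k, Matrix.mul_apply, Matrix.one_apply, Fin.castSucc_ne_last]
  have hkJ : kᴴ * J = 0 := by
    have := congrArg Matrix.conjTranspose hJk
    simpa using this
  clear_value J k
  have hR : ∀ e : Matrix (Fin m) Unit ℂ, e * eᴴ = d * dᴴ →
      (c * Jᴴ + e * kᴴ) * (c * Jᴴ + e * kᴴ)ᴴ = 1 := by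
    intro e he
    have h1 : c * Jᴴ * (J * cᴴ) = c * cᴴ := by
      rw [Matrix.mul_assoc, ← Matrix.mul_assoc Jᴴ, hJJ, Matrix.one_mul]
    have h2 : c * Jᴴ * (k * eᴴ) = 0 := by
      rw [Matrix.mul_assoc, ← Matrix.mul_assoc Jᴴ, hJk, Matrix.zero_mul, Matrix.mul_zero]
    have h3 : e * kᴴ * (J * cᴴ) = 0 := by
      rw [Matrix.mul_assoc, ← Matrix.mul_assoc kᴴ, hkJ, Matrix.zero_mul, Matrix.mul_zero]
    have h4 : e * kᴴ * (k * eᴴ) = e * eᴴ := by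
      rw [Matrix.mul_assoc, ← Matrix.mul_assoc kᴴ, hkk, Matrix.one_mul]
    rw [Matrix.conjTranspose_add, Matrix.conjTranspose_mul, Matrix.conjTranspose_mul,
      Matrix.conjTranspose_conjTranspose, Matrix.conjTranspose_conjTranspose, Matrix.add_mul,
      Matrix.mul_add, Matrix.mul_add, h1, h2, h3, h4, he, add_zero, zero_add, hcd]
  have hRJ : ∀ e : Matrix (Fin m) Unit ℂ, (c * Jᴴ + e * kᴴ) * J = c := by
    intro e
    rw [Matrix.add_mul, Matrix.mul_assoc, Matrix.mul_assoc, hJJ, hkJ, Matrix.mul_one,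
      Matrix.mul_zero, add_zero]
  have hR1 := hR d rfl
  have hR2 := hR (-d) (by simp)
  have hRJ1 := hRJ d
  have hRJ2 := hRJ (-d)
  have hsum : (c * Jᴴ + d * kᴴ)ᴴ + (c * Jᴴ + -d * kᴴ)ᴴ = (2 : ℝ) • (J * cᴴ) := by
    rw [← Matrix.conjTranspose_add]
    have : c * Jᴴ + d * kᴴ + (c * Jᴴ + -d * kᴴ) = (2 : ℝ) • (c * Jᴴ) := by
      rw [Matrix.neg_mul, two_smul]
      abel
    rw [this, Matrix.conjTranspose_smul, Matrix.conjTranspose_mul]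
    simp
  generalize c * Jᴴ + d * kᴴ = R at *
  generalize c * Jᴴ + -d * kᴴ = R' at *
  have hX1 : (Rᴴ * B * R).IsHermitian := Matrix.isHermitian_conjTranspose_mul_mul R hB
  have hX2 : (R'ᴴ * B * R').IsHermitian := Matrix.isHermitian_conjTranspose_mul_mul R' hB
  have hA : (cᴴ * B * c).IsHermitian := Matrix.isHermitian_conjTranspose_mul_mul c hB
  have key := hconv _ _ hX1 hX2
    ((spectrum_coisometry_subset hB hb0 hsB R hR1).trans hI)
    ((spectrum_coisometry_subset hB hb0 hsB R' hR2).trans hI) (1 / 2) (by norm_num) (by norm_num)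
  rw [show (1 - 1 / 2 : ℝ) = 1 / 2 by norm_num] at key
  set Y := (1 / 2 : ℝ) • (Rᴴ * B * R) + (1 / 2 : ℝ) • (R'ᴴ * B * R') with hYdef
  have hY : Y.IsHermitian := by
    rw [hYdef, ← smul_add]
    exact (hX1.add hX2).smul (IsSelfAdjoint.all _)
  have hYJ : Y * J = J * (cᴴ * B * c) := by
    rw [hYdef, ← smul_add, Matrix.smul_mul, Matrix.add_mul, Matrix.mul_assoc _ R,
      Matrix.mul_assoc _ R', hRJ1, hRJ2, Matrix.mul_assoc Rᴴ, Matrix.mul_assoc R'ᴴ,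
      ← Matrix.add_mul, hsum, Matrix.smul_mul, smul_smul]
    norm_num
    simp only [Matrix.mul_assoc]
  have hfY : cfc f Y * J = J * cfc f (cᴴ * B * c) := cfc_intertwine f hY hA J hYJ
  have k0 := key.conjTranspose_mul_mul_same J
  have k1 := (Matrix.le_iff.1 (cfc_coisometry_le f hf0 hB R hR1)).conjTranspose_mul_mul_same J
  have k2 := (Matrix.le_iff.1 (cfc_coisometry_le f hf0 hB R' hR2)).conjTranspose_mul_mul_same J
  have hhalf : (0 : ℝ) ≤ 1 / 2 := by norm_num
  have tot := (k0.add (k1.smul hhalf)).add (k2.smul hhalf)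
  rw [Matrix.le_iff]
  have e1 : Jᴴ * (Rᴴ * cfc f B * R) * J = cᴴ * cfc f B * c := by
    rw [← hRJ1, Matrix.conjTranspose_mul]
    simp only [Matrix.mul_assoc]
  have e2 : Jᴴ * (R'ᴴ * cfc f B * R') * J = cᴴ * cfc f B * c := by
    rw [← hRJ2, Matrix.conjTranspose_mul]
    simp only [Matrix.mul_assoc]
  have e3 : Jᴴ * cfc f Y * J = cfc f (cᴴ * B * c) := by
    rw [Matrix.mul_assoc, hfY, ← Matrix.mul_assoc, hJJ, Matrix.one_mul]
  simp only [Matrix.mul_sub, Matrix.sub_mul, Matrix.mul_add, Matrix.add_mul, Matrix.mul_smul,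
    Matrix.smul_mul, e1, e2, e3] at tot
  have e4 : ∀ F G P Q : Matrix (Fin m) (Fin m) ℂ,
      (1 / 2 : ℝ) • P + (1 / 2 : ℝ) • Q - F + (1 / 2 : ℝ) • (G - P) + (1 / 2 : ℝ) • (G - Q) =
        G - F := by
    intro F G P Q
    module
  rw [e4] at tot
  exact tot

/-- The matrices `A^(1/2)` and `A^(-1/2)`, with the identities relating them to `A` and to
`t ↦ f t / t`. -/
lemma exists_sqrt_invSqrt {m : ℕ} (f : ℝ → ℝ) {A : Matrix (Fin m) (Fin m) ℂ}
    (hA : A.IsHermitian) (hpos : ∀ x ∈ spectrum ℝ A, 0 < x) :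
    ∃ a a' : Matrix (Fin m) (Fin m) ℂ, aᴴ = a ∧ a'ᴴ = a' ∧ a * a = A ∧ a * a' = 1 ∧ a' * a = 1 ∧
      a' * A * a' = 1 ∧ a' * cfc f A * a' = cfc (fun t => f t / t) A := by
  have hc : ∀ h : ℝ → ℝ, ContinuousOn h (spectrum ℝ A) := fun h => continuousOn_matrixSpectrum h A
  have hself : IsSelfAdjoint A := hA.isSelfAdjoint
  have haa' : cfc Real.sqrt A * cfc (fun t => (Real.sqrt t)⁻¹) A = 1 := by
    rw [← cfc_mul _ _ A (hc _) (hc _), ← cfc_one ℝ A]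
    refine cfc_congr fun x hx => ?_
    have := Real.sqrt_pos.2 (hpos x hx)
    simp only [Pi.one_apply]
    field_simp
  have haa : cfc Real.sqrt A * cfc Real.sqrt A = A := by
    conv_rhs => rw [← cfc_id ℝ A]
    rw [← cfc_mul _ _ A (hc _) (hc _)]
    exact cfc_congr fun x hx => Real.mul_self_sqrt (hpos x hx).le
  have ha'a := mul_eq_one_comm.1 haa'
  refine ⟨cfc Real.sqrt A, cfc (fun t => (Real.sqrt t)⁻¹) A,
    (IsSelfAdjoint.cfc (f := Real.sqrt) (a := A)).star_eq,
    (IsSelfAdjoint.cfc (f := fun t => (Real.sqrt t)⁻¹) (a := A)).star_eq,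
    haa, haa', ha'a, ?_, ?_⟩
  · nth_rewrite 2 [← haa]
    rw [← Matrix.mul_assoc, ha'a, Matrix.one_mul, haa']
  · rw [← cfc_mul _ _ A (hc _) (hc _), ← cfc_mul _ _ A (hc _) (hc _)]
    refine cfc_congr fun x hx => ?_
    have h1 := Real.mul_self_sqrt (hpos x hx).le
    calc (√x)⁻¹ * f x * (√x)⁻¹ = f x / (√x * √x) := by ring
      _ = f x / x := by rw [h1]

lemma rankOne_monotone {m : ℕ} {f : ℝ → ℝ} {I : Set ℝ} (hf0 : f 0 ≤ 0)
    (hconv : MatrixConvexOn (m + 1) f I) {b : ℝ} (hb0 : 0 ≤ b) (hI : Icc 0 b ⊆ I)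
    {A B : Matrix (Fin m) (Fin m) ℂ} (hA : A.IsHermitian) (hB : B.IsHermitian)
    (hsA : ∀ x ∈ spectrum ℝ A, 0 < x) (hsB : spectrum ℝ B ⊆ Ioc 0 b)
    (v : Matrix (Fin m) Unit ℂ) (hAB : B = A + v * vᴴ) :
    cfc (fun t => f t / t) A ≤ cfc (fun t => f t / t) B := by
  obtain ⟨a, a', ha, ha', haa, haa', ha'a, -, hgA⟩ := exists_sqrt_invSqrt f hA hsA
  obtain ⟨_, b', -, hb', -, -, -, hb'B, hgB⟩ :=
    exists_sqrt_invSqrt f hB (fun x hx => (hsB hx).1)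
  have hJ := rankOne_jensen hf0 hconv hb0 hI hB (hsB.trans Ioc_subset_Icc_self)
    (b' * a) (b' * v) (by
      rw [Matrix.conjTranspose_mul, Matrix.conjTranspose_mul, ha, hb', ← hb'B, hAB,
        Matrix.mul_add, Matrix.add_mul, ← haa]
      simp only [Matrix.mul_assoc])
  have e1 : (b' * a)ᴴ * B * (b' * a) = A := by
    calc (b' * a)ᴴ * B * (b' * a) = a * (b' * B * b') * a := by
          rw [Matrix.conjTranspose_mul, ha, hb']
          simp only [Matrix.mul_assoc]
      _ = A := by rw [hb'B, Matrix.mul_one, haa]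
  have e2 : (b' * a)ᴴ * cfc f B * (b' * a) = a * cfc (fun t => f t / t) B * a := by
    rw [← hgB, Matrix.conjTranspose_mul, ha, hb']
    simp only [Matrix.mul_assoc]
  rw [e1, e2, Matrix.le_iff] at hJ
  have h := hJ.conjTranspose_mul_mul_same a'
  rw [ha', Matrix.mul_sub, Matrix.sub_mul, hgA] at h
  rw [Matrix.le_iff]
  convert h using 2
  calc cfc (fun t => f t / t) B = (a' * a) * cfc (fun t => f t / t) B * (a * a') := by
        rw [ha'a, haa', Matrix.one_mul, Matrix.mul_one]
    _ = _ := by simp only [Matrix.mul_assoc]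

/-- Theorem 3.2: if `f : [0,α) → ℝ` is continuous, `f(0) ≤ 0`, and `f` is matrix convex of
order `n` on `[0,α)`, then `g(t) = f(t)/t` is matrix monotone of order `n - 1` on `(0,α)`. -/
theorem stmt_8 (n : ℕ) (hn : 2 ≤ n) (α : EReal) (hα : 0 < α) (f : ℝ → ℝ)
    (hfc : ContinuousOn f {x : ℝ | 0 ≤ x ∧ (x : EReal) < α})
    (hf0 : f 0 ≤ 0)
    (hconv : MatrixConvexOn n f {x : ℝ | 0 ≤ x ∧ (x : EReal) < α}) :
    MatrixMonotoneOn (n - 1) (fun t => f t / t) {x : ℝ | 0 < x ∧ (x : EReal) < α} := by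
  obtain ⟨m, rfl⟩ : ∃ m, n = m + 1 := ⟨n - 1, by omega⟩
  rw [Nat.add_sub_cancel]
  intro A B hA hB hsA hsB hAB
  have : Nonempty (Fin m) := ⟨⟨0, by omega⟩⟩
  obtain ⟨a, haA, hamin⟩ := Set.exists_min_image (spectrum ℝ A) id Matrix.finite_real_spectrum
    (ContinuousFunctionalCalculus.spectrum_nonempty A hA.isSelfAdjoint)
  obtain ⟨b, hbB, hbmax⟩ := Set.exists_max_image (spectrum ℝ B) id Matrix.finite_real_spectrum
    (ContinuousFunctionalCalculus.spectrum_nonempty B hB.isSelfAdjoint)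
  have ha : 0 < a := (hsA haA).1
  have hb : 0 < b ∧ (b : EReal) < α := hsB hbB
  have haA' : algebraMap ℝ _ a ≤ A :=
    algebraMap_le_of_le_spectrum (ha := hA.isSelfAdjoint) fun x hx => hamin x hx
  have hBb' : B ≤ algebraMap ℝ _ b :=
    le_algebraMap_of_spectrum_le (ha := hB.isSelfAdjoint) fun x hx => hbmax x hx
  have hI : Icc 0 b ⊆ {x : ℝ | 0 ≤ x ∧ (x : EReal) < α} := fun x hx =>
    ⟨hx.1, (EReal.coe_le_coe_iff.2 hx.2).trans_lt hb.2⟩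
  obtain ⟨k, v, hv⟩ := Matrix.posSemidef_iff_eq_sum_vecMulVec.1 hAB
  have hvpos : ∀ i, 0 ≤ vecMulVec (v i) (star (v i)) := fun i =>
    Matrix.nonneg_iff_posSemidef.2 (Matrix.posSemidef_vecMulVec_self_star _)
  have hH : ∀ s : Finset (Fin k), (A + ∑ i ∈ s, vecMulVec (v i) (star (v i))).IsHermitian :=
    fun s => hA.add (Matrix.nonneg_iff_posSemidef.1 (Finset.sum_nonneg fun i _ => hvpos i)).1
  have hspec : ∀ s : Finset (Fin k),
      spectrum ℝ (A + ∑ i ∈ s, vecMulVec (v i) (star (v i))) ⊆ Ioc 0 b := by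
    intro s
    refine (spectrum_subset_Icc (hH s) (a := a) (b := b) ?_ ?_).trans
      fun x hx => ⟨ha.trans_le hx.1, hx.2⟩
    · exact haA'.trans (le_add_of_nonneg_right (Finset.sum_nonneg fun i _ => hvpos i))
    · refine le_trans ?_ hBb'
      rw [← add_sub_cancel A B, hv]
      gcongr
      · exact fun i _ _ => hvpos i
      · exact Finset.subset_univ s
  have hind : ∀ s : Finset (Fin k), cfc (fun t => f t / t) A ≤
      cfc (fun t => f t / t) (A + ∑ i ∈ s, vecMulVec (v i) (star (v i))) := by
    intro s
    induction s using Finset.induction_on with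
    | empty => simp
    | insert i s his ih =>
      refine ih.trans (rankOne_monotone hf0 hconv hb.1.le hI (hH s) (hH _)
        (fun x hx => (hspec s hx).1) (hspec _) (replicateCol Unit (v i)) ?_)
      rw [Finset.sum_insert his, vecMulVec_eq Unit, conjTranspose_replicateCol]
      abel
  have := hind Finset.univ
  rw [← hv, add_sub_cancel] at this
  exact this
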